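/- For n ≥ 2 and k ≥ 1, the polynomial c_n^{(k)}(x) = Σ_{π ∈ Q̃_n(k)} x^{ap(π)}, summed over k-Stirling permutations of order n whose first letter is 1, is γ-positive: c_n^{(k)}(x) = Σ_{i=1}^{⌊n/2⌋} γ̃_{n,k,i} x^i (1+x)^{n−2i}, where γ̃_{n,k,i} is the number of increasing pruned even k-ary trees on {1,...,n} with i labeled leaves and no young leaves. -/

import Mathlib

open Polynomial
open scoped Classical

noncomputable section

/-- Number of longest ascent-plateaux of the length-`L` word `v` (values in `ℕ`):
indices `i` with `v i < v (i+1) = v (i+2) = ⋯ = v (i+k)`. -/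
def apWord (k L : ℕ) (v : ℕ → ℕ) : ℕ :=
  ((Finset.range L).filter fun i =>
    i + k < L ∧ v i < v (i + 1) ∧ ∀ j < k, v (i + 1 + j) = v (i + 1)).card

/-- `w : Fin (k*n) → Fin n` is a `k`-Stirling permutation of order `n`: every letter
occurs exactly `k` times and letters lying between two equal letters are at least as
large. -/
def IsKStirling (k n : ℕ) (w : Fin (k * n) → Fin n) : Prop :=
  (∀ m : Fin n, (Finset.univ.filter fun i => w i = m).card = k) ∧
  (∀ i j l : Fin (k * n), i ≤ j → j ≤ l → w i = w l → w i ≤ w j)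

/-- The word (with values in `{1,…,n}` and junk value `0` out of range) associated to a
`k`-Stirling permutation. -/
def wordOf (k n : ℕ) (w : Fin (k * n) → Fin n) : ℕ → ℕ :=
  fun i => if h : i < k * n then (w ⟨i, h⟩ : ℕ) + 1 else 0

/-- The number `ap(π)` of longest ascent-plateaux of a `k`-Stirling permutation. -/
def apStat (k n : ℕ) (w : Fin (k * n) → Fin n) : ℕ :=
  apWord k (k * n) (wordOf k n w)

/-- The number `lap(π)` of left longest ascent-plateaux: longest ascent-plateaux of the
word `0π` obtained by prepending a zero. -/
def lapStat (k n : ℕ) (w : Fin (k * n) → Fin n) : ℕ :=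
  apWord k (k * n + 1) (fun i => if i = 0 then 0 else wordOf k n w (i - 1))

/-!  Increasing pruned even `k`-ary forests on a linearly ordered label set `α` are
encoded by parent functions `f : α → Option (α × Fin k)`: `f x = some (y, s)` means the
labeled node `x` is attached to the `s`-th (unlabeled) child of the labeled node `y`,
and `f x = none` means `x` is the root of a component.  The increasing condition says
that labels of the children of each node increase, so the ordered-tree structure is
determined by `f`; components are ordered by their (increasing) root labels.  -/

/-- The labeled node `u` has a labeled grand child (so it is an internal labeled node
carrying its `k` unlabeled children in the pruned tree). -/
def hasChild {α : Type} {k : ℕ} (f : α → Option (α × Fin k)) (u : α) : Prop :=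
  ∃ x s, f x = some (u, s)

/-- `f` encodes an increasing pruned even `k`-ary forest: parents carry smaller labels. -/
def IsForest {α : Type} [LT α] {k : ℕ} (f : α → Option (α × Fin k)) : Prop :=
  ∀ x y s, f x = some (y, s) → y < x

/-- `f` encodes an increasing pruned even `k`-ary tree: a forest with a unique root. -/
def IsTree {α : Type} [LT α] {k : ℕ} (f : α → Option (α × Fin k)) : Prop :=
  IsForest f ∧ ∃! r, f r = none

/-- `lleaf`: the number of labeled leaves. -/
noncomputable def lleafStat {α : Type} [Fintype α] {k : ℕ}
    (f : α → Option (α × Fin k)) : ℕ :=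
  (Finset.univ.filter fun u => ¬ hasChild f u).card

/-- `si`: the number of singleton components (roots that are leaves). -/
noncomputable def siStat {α : Type} [Fintype α] {k : ℕ}
    (f : α → Option (α × Fin k)) : ℕ :=
  (Finset.univ.filter fun u => f u = none ∧ ¬ hasChild f u).card

/-- A non-root labeled node is old if it carries the greatest label among all the
grand children of its grand parent. -/
def oldNode {α : Type} [LinearOrder α] {k : ℕ}
    (f : α → Option (α × Fin k)) (v : α) : Prop :=
  ∃ y s, f v = some (y, s) ∧ ∀ x : α, (∃ t, f x = some (y, t)) → x ≤ v

/-- A non-root labeled node that is not old is young. -/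
def youngNode {α : Type} [LinearOrder α] {k : ℕ}
    (f : α → Option (α × Fin k)) (v : α) : Prop :=
  (∃ y s, f v = some (y, s)) ∧ ¬ oldNode f v

/-- `oleaf`: the number of old labeled leaves. -/
noncomputable def oleafStat {α : Type} [LinearOrder α] [Fintype α] {k : ℕ}
    (f : α → Option (α × Fin k)) : ℕ :=
  (Finset.univ.filter fun v => oldNode f v ∧ ¬ hasChild f v).card

/-- `oint`: the number of old internal labeled nodes. -/
noncomputable def ointStat {α : Type} [LinearOrder α] [Fintype α] {k : ℕ}
    (f : α → Option (α × Fin k)) : ℕ :=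
  (Finset.univ.filter fun v => oldNode f v ∧ hasChild f v).card

/-- `F` has no young leaves. -/
def NoYoungLeaf {α : Type} [LinearOrder α] {k : ℕ}
    (f : α → Option (α × Fin k)) : Prop :=
  ∀ v : α, ¬ (youngNode f v ∧ ¬ hasChild f v)

/-- The generalized Foata–Strehl transformation `Φ_v`.  If `v` is an old internal node
with grand parent `u`, the subtrees hanging from the `k` children of `v` are transferred
(slotwise) to the corresponding children of `u`, turning `v` into a leaf; if `v` is a
young leaf, all subtrees hanging from the children of `u` whose root labels exceed `v`
are transferred (slotwise) to `k` freshly attached children of `v`; otherwise nothing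
happens. -/
noncomputable def phi {α : Type} [LinearOrder α] {k : ℕ} (v : α)
    (f : α → Option (α × Fin k)) : α → Option (α × Fin k) :=
  match f v with
  | none => f
  | some (u, _) =>
    if ∀ x : α, (∃ t, f x = some (u, t)) → x ≤ v then
      -- `v` is old
      if hasChild f v then
        (fun x => match f x with
          | some (w, j) => if w = v then some (u, j) else some (w, j)
          | none => none)
      else f
    else
      -- `v` is young
      if hasChild f v then f
      else
        (fun x => match f x with
          | some (w, j) => if w = u ∧ v < x then some (v, j) else some (w, j)
          | none => none)

/-- `u` is a removable old leaf of the forest `f`: an old leaf that is a grand child of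
the root `r` of its component, the only leaf among the grand children of `r`, the first
`k-1` children of `r` are leaves, and the label of `u` is smaller than the label of
every later root. -/
def removableOldLeaf {α : Type} [LinearOrder α] {k : ℕ}
    (f : α → Option (α × Fin k)) (u : α) : Prop :=
  oldNode f u ∧ ¬ hasChild f u ∧
  ∃ (r : α) (s : Fin k), f u = some (r, s) ∧ f r = none ∧
    (∀ x : α, (∃ t, f x = some (r, t)) → x ≠ u → hasChild f x) ∧
    (∀ (x : α) (j : Fin k), (j : ℕ) < k - 1 → f x ≠ some (r, j)) ∧
    (∀ r' : α, f r' = none → r < r' → u < r')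

/-- `u` is a removable young leaf of the forest `f`: a young leaf that is a grand child
of the root `r` of the rightmost component such that after applying `Φ_u` the first
`k-1` children of `r` are leaves. -/
noncomputable def removableYoungLeaf {α : Type} [LinearOrder α] {k : ℕ}
    (f : α → Option (α × Fin k)) (u : α) : Prop :=
  youngNode f u ∧ ¬ hasChild f u ∧
  ∃ (r : α) (s : Fin k), f u = some (r, s) ∧ f r = none ∧
    (∀ r' : α, f r' = none → r' ≤ r) ∧
    (∀ (x : α) (j : Fin k), (j : ℕ) < k - 1 → phi u f x ≠ some (r, j))

/-- The forest lies in the class `\overline{𝓕}_n(k)`: the rightmost tree is a singleton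
or the first `k-1` children of its root are leaves. -/
def inBarClass {α : Type} [LinearOrder α] {k : ℕ}
    (f : α → Option (α × Fin k)) : Prop :=
  ∃ r : α, f r = none ∧ (∀ r' : α, f r' = none → r' ≤ r) ∧
    (¬ hasChild f r ∨
      ∀ (x : α) (j : Fin k), (j : ℕ) < k - 1 → f x ≠ some (r, j))

/-!
Attaching a node with the largest label to a tree in all possible ways acts on the generating
function as `k` times the derivation `z ↦ z * (p + q)`, `p ↦ z`, `q ↦ z`, where `z` marks the pairs
of an old leaf and its grandparent, `p` the young leaves and `q` the remaining nodes.  In terms of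
`u = p + q` this derivation reads `z ↦ z * u`, `u ↦ 2 * z`, so from `n = 2` on the generating
function depends on `p` and `q` only through `u`, and `p` can be moved into `q`: this leaves only
the trees without young leaves.

Inserting the `k` copies of the largest letter into a `k`-Stirling permutation acts as `k` times
the derivation `x ↦ x * y`, `y ↦ x * y`, where the exponents of `x` and `y` are the number of
ascent-plateaux and its complement to `n`.  This is the previous derivation at `z = x * y`, `p = x`,
`q = y`, so the permutations have the generating function of the trees.
-/

section Derivations

variable {R A : Type*} [CommSemiring R] [CommSemiring A] [Algebra R A]

lemma derivation_mem_adjoin (D : Derivation R A A) {s : Set A}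
    (hs : ∀ a ∈ s, D a ∈ Algebra.adjoin R s) {a : A} (ha : a ∈ Algebra.adjoin R s) :
    D a ∈ Algebra.adjoin R s := by
  induction ha using Algebra.adjoin_induction with
  | mem a ha => exact hs a ha
  | algebraMap r => simp
  | add a b _ _ iha ihb => simpa using add_mem iha ihb
  | mul a b ha hb iha ihb =>
    simpa using add_mem (mul_mem ha ihb) (mul_mem hb iha)

lemma derivation_eulerian_monomial (D : Derivation R A A) {x y : A} (hx : D x = x * y)
    (hy : D y = x * y) (a b : ℕ) :
    D (x ^ a * y ^ b) = a * (x ^ a * y ^ (b + 1)) + b * (x ^ (a + 1) * y ^ b) := by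
  rcases a with _ | a <;> rcases b with _ | b <;>
    simp only [Derivation.leibniz, Derivation.leibniz_pow, hx, hy, smul_eq_mul, nsmul_eq_mul,
      Nat.add_sub_cancel, Nat.cast_zero] <;> ring

lemma derivation_leaf_monomial (D : Derivation R A A) {z p q : A} (hz : D z = z * (p + q))
    (hp : D p = z) (hq : D q = z) (a b c : ℕ) :
    D (z ^ a * p ^ b * q ^ c) =
      a * (z ^ a * p ^ b * q ^ (c + 1)) + b * (z ^ (a + 1) * p ^ (b - 1) * q ^ c) +
        a * (z ^ a * p ^ (b + 1) * q ^ c) + c * (z ^ (a + 1) * p ^ b * q ^ (c - 1)) := by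
  rcases a with _ | a <;> rcases b with _ | b <;> rcases c with _ | c <;>
    simp only [Derivation.leibniz, Derivation.leibniz_pow, hz, hp, hq, smul_eq_mul, nsmul_eq_mul,
      Nat.add_sub_cancel, Nat.cast_zero] <;> ring

end Derivations

section Forests

variable {α : Type} {k : ℕ}

/-- The labeled node above `x`, i.e. its grandparent in the tree with the unlabeled nodes;
`none` if `x` is a root. -/
def grandParent (f : α → Option (α × Fin k)) (x : α) : Option α := (f x).map Prod.fst

variable {f : α → Option (α × Fin k)}

lemma grandParent_eq_some {x y : α} : grandParent f x = some y ↔ ∃ s, f x = some (y, s) := by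
  simp [grandParent]

lemma grandParent_eq_none {x : α} : grandParent f x = none ↔ f x = none := by
  simp [grandParent]

lemma hasChild_iff {y : α} : hasChild f y ↔ ∃ x, grandParent f x = some y := by
  simp only [hasChild, grandParent_eq_some]

lemma IsForest.exists_not_hasChild [LinearOrder α] [Finite α] [Nonempty α] (hf : IsForest f) :
    ∃ v, ¬ hasChild f v := by
  obtain ⟨v, hv⟩ := Finite.exists_max (id : α → α)
  exact ⟨v, fun ⟨x, s, hx⟩ => (hf x v s hx).not_ge (hv x)⟩

lemma IsTree.hasChild_root [LinearOrder α] [WellFoundedLT α] [Nontrivial α] (hf : IsTree f)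
    {r : α} (hr : f r = none) : hasChild f r := by
  obtain ⟨x, hxr, hmin⟩ := WellFounded.has_min wellFounded_lt {x | x ≠ r} (exists_ne r)
  obtain ⟨⟨y, s⟩, hy⟩ := Option.ne_none_iff_exists'.1 fun hx => hxr (hf.2.unique hx hr)
  obtain rfl : y = r := not_not.1 fun hyr => hmin y hyr (hf.1 x y s hy)
  exact ⟨x, s, hy⟩

section LinearOrder

variable [LinearOrder α]

lemma oldNode_iff {v : α} :
    oldNode f v ↔ ∃ y, grandParent f v = some y ∧ ∀ x, grandParent f x = some y → x ≤ v := by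
  simp only [oldNode, grandParent_eq_some]
  grind

lemma youngNode_iff {v : α} : youngNode f v ↔ grandParent f v ≠ none ∧ ¬ oldNode f v := by
  simp [youngNode, Option.ne_none_iff_exists', grandParent_eq_some]

lemma oldNode.eq_of_grandParent_eq {v w : α} (hv : oldNode f v) (hw : oldNode f w)
    (h : grandParent f v = grandParent f w) : v = w := by
  obtain ⟨y, hvy, hmaxv⟩ := oldNode_iff.1 hv
  obtain ⟨y', hwy', hmaxw⟩ := oldNode_iff.1 hw
  obtain rfl : y = y' := Option.some.inj (hvy.symm.trans (h.trans hwy'))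
  exact le_antisymm (hmaxw v hvy) (hmaxv w hwy')

variable [Fintype α] (f)

/-- The old leaves of a forest. -/
def oldLeaves : Finset α := {v | oldNode f v ∧ ¬ hasChild f v}

/-- The young leaves of a forest. -/
def youngLeaves : Finset α := {v | youngNode f v ∧ ¬ hasChild f v}

/-- The nodes having an old leaf as a grandchild; each has exactly one. -/
def oldLeafParents : Finset α := {y | ∃ v ∈ oldLeaves f, grandParent f v = some y}

/-- The nodes that are neither leaves nor grandparents of old leaves, and isolated roots. -/
def otherNodes : Finset α := (oldLeaves f ∪ youngLeaves f ∪ oldLeafParents f)ᶜ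

variable {f}

lemma mem_oldLeaves {v : α} : v ∈ oldLeaves f ↔ oldNode f v ∧ ¬ hasChild f v := by
  simp [oldLeaves]

lemma mem_youngLeaves {v : α} :
    v ∈ youngLeaves f ↔ grandParent f v ≠ none ∧ ¬ oldNode f v ∧ ¬ hasChild f v := by
  simp [youngLeaves, youngNode_iff, and_assoc]

lemma mem_oldLeafParents {y : α} :
    y ∈ oldLeafParents f ↔ ∃ v ∈ oldLeaves f, grandParent f v = some y := by
  simp [oldLeafParents]

lemma hasChild_of_mem_oldLeafParents {y : α} (hy : y ∈ oldLeafParents f) : hasChild f y :=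
  let ⟨v, _, hv⟩ := mem_oldLeafParents.1 hy
  hasChild_iff.2 ⟨v, hv⟩

variable (f)

lemma disjoint_oldLeaves_youngLeaves : Disjoint (oldLeaves f) (youngLeaves f) :=
  Finset.disjoint_left.2 fun _ ho hy => (mem_youngLeaves.1 hy).2.1 (mem_oldLeaves.1 ho).1

lemma disjoint_leaves_oldLeafParents :
    Disjoint (oldLeaves f ∪ youngLeaves f) (oldLeafParents f) := by
  refine Finset.disjoint_left.2 fun y hl hp => ?_
  have hc := hasChild_of_mem_oldLeafParents hp
  rcases Finset.mem_union.1 hl with ho | hy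
  · exact (mem_oldLeaves.1 ho).2 hc
  · exact (mem_youngLeaves.1 hy).2.2 hc

lemma card_oldLeafParents : (oldLeafParents f).card = (oldLeaves f).card := by
  have himage : (oldLeafParents f).map Function.Embedding.some =
      (oldLeaves f).image (grandParent f) := by
    ext (_ | y)
    · have hparent (v : α) (hv : v ∈ oldLeaves f) : grandParent f v ≠ none := by
        obtain ⟨y, hy, _⟩ := oldNode_iff.1 (mem_oldLeaves.1 hv).1
        simp [hy]
      simpa using hparent
    · simp [mem_oldLeafParents]
  rw [← Finset.card_map, himage, Finset.card_image_of_injOn]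
  exact fun v hv w hw => (mem_oldLeaves.1 hv).1.eq_of_grandParent_eq (mem_oldLeaves.1 hw).1

lemma sum_eq_sum_nodeClasses {M : Type*} [AddCommMonoid M] (F : α → M) :
    ∑ y, F y = ∑ y ∈ oldLeaves f, F y + ∑ y ∈ youngLeaves f, F y +
      ∑ y ∈ oldLeafParents f, F y + ∑ y ∈ otherNodes f, F y := by
  rw [otherNodes, ← Finset.sum_union (disjoint_oldLeaves_youngLeaves f),
    ← Finset.sum_union (disjoint_leaves_oldLeafParents f), Finset.sum_add_sum_compl]

lemma card_nodeClasses : 2 * (oldLeaves f).card + (youngLeaves f).card + (otherNodes f).card =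
    Fintype.card α := by
  have hsum := sum_eq_sum_nodeClasses f fun _ => 1
  simp only [Finset.sum_const, smul_eq_mul, mul_one, card_oldLeafParents,
    Finset.card_univ] at hsum
  lia

variable {f}

lemma noYoungLeaf_iff : NoYoungLeaf f ↔ youngLeaves f = ∅ := by
  simp [NoYoungLeaf, youngLeaves, Finset.filter_eq_empty_iff]

lemma IsTree.lleafStat_eq [Nontrivial α] (hf : IsTree f) :
    lleafStat f = (oldLeaves f).card + (youngLeaves f).card := by
  rw [← Finset.card_union_of_disjoint (disjoint_oldLeaves_youngLeaves f), lleafStat]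
  congr 1
  ext v
  have hroot : grandParent f v = none → hasChild f v :=
    fun hv => hf.hasChild_root (grandParent_eq_none.1 hv)
  simp only [Finset.mem_filter, Finset.mem_univ, true_and, Finset.mem_union, mem_oldLeaves,
    mem_youngLeaves]
  tauto

lemma IsTree.lleafStat_mem_Icc [Nontrivial α] (hf : IsTree f) (hyoung : NoYoungLeaf f) :
    lleafStat f ∈ Finset.Icc 1 (Fintype.card α / 2) := by
  obtain ⟨v, hv⟩ := hf.1.exists_not_hasChild
  have hpos : 0 < lleafStat f := Finset.card_pos.2 ⟨v, by simpa using hv⟩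
  have hcard := card_nodeClasses f
  have hleaf := hf.lleafStat_eq
  rw [noYoungLeaf_iff.1 hyoung, Finset.card_empty] at hcard hleaf
  exact Finset.mem_Icc.2 ⟨hpos, by lia⟩

end LinearOrder

end Forests

section AttachLast

variable {n k : ℕ}

/-- The tree obtained from `f` by attaching a new node, with the largest label, to the `s`-th
unlabeled child of `y`. -/
def attachLast (f : Fin n → Option (Fin n × Fin k)) (y : Fin n) (s : Fin k) :
    Fin (n + 1) → Option (Fin (n + 1) × Fin k) :=
  Fin.snoc (α := fun _ => Option (Fin (n + 1) × Fin k))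
    (fun x => (f x).map (Prod.map Fin.castSucc id)) (some (y.castSucc, s))

variable (f : Fin n → Option (Fin n × Fin k)) (y : Fin n) (s : Fin k)

lemma attachLast_last : attachLast f y s (Fin.last n) = some (y.castSucc, s) :=
  Fin.snoc_last ..

lemma attachLast_castSucc (x : Fin n) :
    attachLast f y s x.castSucc = (f x).map (Prod.map Fin.castSucc id) :=
  Fin.snoc_castSucc ..

lemma grandParent_attachLast_last :
    grandParent (attachLast f y s) (Fin.last n) = some y.castSucc := by
  simp [grandParent, attachLast_last]

lemma grandParent_attachLast_castSucc (x : Fin n) :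
    grandParent (attachLast f y s) x.castSucc = (grandParent f x).map Fin.castSucc := by
  simp [grandParent, attachLast_castSucc, Function.comp_def]

lemma not_hasChild_attachLast_last : ¬ hasChild (attachLast f y s) (Fin.last n) := by
  simp [hasChild_iff, Fin.exists_fin_succ', grandParent_attachLast_last,
    grandParent_attachLast_castSucc, Fin.castSucc_ne_last]

lemma hasChild_attachLast_castSucc {u : Fin n} :
    hasChild (attachLast f y s) u.castSucc ↔ hasChild f u ∨ y = u := by
  simp [hasChild_iff, Fin.exists_fin_succ', grandParent_attachLast_last,
    grandParent_attachLast_castSucc]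

lemma oldNode_attachLast_last : oldNode (attachLast f y s) (Fin.last n) :=
  oldNode_iff.2 ⟨_, grandParent_attachLast_last f y s, fun x _ => Fin.le_last x⟩

lemma oldNode_attachLast_castSucc {v : Fin n} :
    oldNode (attachLast f y s) v.castSucc ↔ oldNode f v ∧ grandParent f v ≠ some y := by
  simp only [oldNode_iff, Fin.exists_fin_succ', Fin.forall_fin_succ', grandParent_attachLast_last,
    grandParent_attachLast_castSucc, Option.map_eq_some_iff, Fin.castSucc_inj,
    Option.some_inj, Fin.castSucc_le_castSucc_iff]
  grind [Fin.castSucc_ne_last, Fin.castSucc_lt_last]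

/-- The old leaf grandchildren of `y`, of which there is at most one. -/
def oldLeafChildren : Finset (Fin n) := {v ∈ oldLeaves f | grandParent f v = some y}

lemma card_oldLeafChildren :
    (oldLeafChildren f y).card = if y ∈ oldLeafParents f then 1 else 0 := by
  split_ifs with hy
  · obtain ⟨v, hv, hvy⟩ := mem_oldLeafParents.1 hy
    refine Finset.card_eq_one.2 ⟨v, Finset.eq_singleton_iff_unique_mem.2
      ⟨Finset.mem_filter.2 ⟨hv, hvy⟩, fun w hw => ?_⟩⟩
    obtain ⟨hw, hwy⟩ := Finset.mem_filter.1 hw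
    exact (mem_oldLeaves.1 hw).1.eq_of_grandParent_eq (mem_oldLeaves.1 hv).1 (hwy.trans hvy.symm)
  · rw [oldLeafChildren, Finset.card_eq_zero, Finset.filter_eq_empty_iff]
    exact fun v hv hvy => hy (mem_oldLeafParents.2 ⟨v, hv, hvy⟩)

lemma oldLeafChildren_subset : oldLeafChildren f y ⊆ (oldLeaves f).erase y := by
  intro v hv
  obtain ⟨hold, hvy⟩ := Finset.mem_filter.1 hv
  refine Finset.mem_erase.2 ⟨?_, hold⟩
  rintro rfl
  exact (mem_oldLeaves.1 hold).2 (hasChild_iff.2 ⟨v, hvy⟩)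

lemma oldLeaves_attachLast : oldLeaves (attachLast f y s) =
    insert (Fin.last n) (((oldLeaves f).erase y \ oldLeafChildren f y).map Fin.castSuccEmb) := by
  ext v
  cases v using Fin.lastCases with
  | last => simp [mem_oldLeaves, oldNode_attachLast_last, not_hasChild_attachLast_last]
  | cast v =>
    rw [Finset.mem_insert, ← Fin.coe_castSuccEmb, Finset.mem_map']
    simp only [Fin.coe_castSuccEmb, Fin.castSucc_ne_last, mem_oldLeaves,
      oldNode_attachLast_castSucc, hasChild_attachLast_castSucc, oldLeafChildren,
      Finset.mem_sdiff, Finset.mem_erase, Finset.mem_filter]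
    tauto

lemma youngLeaves_attachLast : youngLeaves (attachLast f y s) =
    ((youngLeaves f).erase y ∪ oldLeafChildren f y).map Fin.castSuccEmb := by
  ext v
  cases v using Fin.lastCases with
  | last => simp [mem_youngLeaves, oldNode_attachLast_last, Fin.castSucc_ne_last]
  | cast v =>
    have hsub := @oldLeafChildren_subset n k f y v
    simp only [oldLeafChildren, Finset.mem_erase, Finset.mem_filter] at hsub
    rw [← Fin.coe_castSuccEmb, Finset.mem_map']
    simp only [Fin.coe_castSuccEmb, mem_youngLeaves, grandParent_attachLast_castSucc,
      oldNode_attachLast_castSucc, hasChild_attachLast_castSucc, ne_eq, Option.map_eq_none_iff,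
      Finset.mem_union, Finset.mem_erase, oldLeafChildren, Finset.mem_filter,
      mem_oldLeaves] at hsub ⊢
    grind

lemma card_oldLeaves_attachLast :
    (oldLeaves (attachLast f y s)).card + (if y ∈ oldLeafParents f then 1 else 0) +
      (if y ∈ oldLeaves f then 1 else 0) = (oldLeaves f).card + 1 := by
  have herase := Finset.card_erase_add_one (s := oldLeaves f) (a := y)
  have hsdiff := Finset.card_sdiff_add_card_eq_card (oldLeafChildren_subset f y)
  rw [oldLeaves_attachLast, Finset.card_insert_of_notMem (by simp [Fin.castSucc_ne_last]),
    Finset.card_map, ← card_oldLeafChildren]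
  split_ifs with hy
  · lia
  · rw [Finset.erase_eq_of_notMem hy] at hsdiff ⊢
    lia

lemma card_youngLeaves_attachLast :
    (youngLeaves (attachLast f y s)).card + (if y ∈ youngLeaves f then 1 else 0) =
      (youngLeaves f).card + if y ∈ oldLeafParents f then 1 else 0 := by
  have herase := Finset.card_erase_add_one (s := youngLeaves f) (a := y)
  have hdisj : Disjoint ((youngLeaves f).erase y) (oldLeafChildren f y) :=
    (disjoint_oldLeaves_youngLeaves f).symm.mono (Finset.erase_subset _ _)
      (Finset.filter_subset _ _)
  rw [youngLeaves_attachLast, Finset.card_map, Finset.card_union_of_disjoint hdisj,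
    ← card_oldLeafChildren]
  split_ifs with hy
  · lia
  · rw [Finset.erase_eq_of_notMem hy, add_zero]

lemma isTree_attachLast : IsTree (attachLast f y s) ↔ IsTree f := by
  refine and_congr ?_ ?_
  · simp [IsForest, Fin.forall_fin_succ', attachLast_last, attachLast_castSucc]
  · simp [ExistsUnique, Fin.exists_fin_succ', Fin.forall_fin_succ', attachLast_last,
      attachLast_castSucc]

lemma attachLast_inj {f g : Fin n → Option (Fin n × Fin k)} {y z : Fin n} {s t : Fin k} :
    attachLast f y s = attachLast g z t ↔ f = g ∧ y = z ∧ s = t := by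
  have hmap : Function.Injective (Option.map (Prod.map (Fin.castSucc (n := n)) (@id (Fin k)))) :=
    Option.map_injective ((Fin.castSucc_injective n).prodMap Function.injective_id)
  rw [attachLast, attachLast, Fin.snoc_inj]
  simp [funext_iff, hmap.eq_iff]

lemma IsForest.exists_map_castSucc_eq {g : Fin (n + 1) → Option (Fin (n + 1) × Fin k)}
    (hg : IsForest g) (x : Fin (n + 1)) :
    ∃ o : Option (Fin n × Fin k), o.map (Prod.map Fin.castSucc id) = g x := by
  rcases hx : g x with _ | ⟨y, s⟩
  · exact ⟨none, rfl⟩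
  · obtain ⟨z, rfl⟩ := Fin.exists_castSucc_eq.2 ((hg x y s hx).trans_le (Fin.le_last x)).ne
    exact ⟨some (z, s), rfl⟩

lemma IsTree.apply_last_ne_none [NeZero n] {g : Fin (n + 1) → Option (Fin (n + 1) × Fin k)}
    (hg : IsTree g) : g (Fin.last n) ≠ none := by
  have hzero : g 0 = none := Option.eq_none_iff_forall_ne_some.2
    fun ⟨y, s⟩ h => (Fin.zero_le y).not_gt (hg.1 0 y s h)
  exact fun hlast => Fin.last_pos'.ne (hg.2.unique hzero hlast)

lemma exists_attachLast [NeZero n] {g : Fin (n + 1) → Option (Fin (n + 1) × Fin k)}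
    (hg : IsTree g) : ∃ f y s, attachLast f y s = g := by
  choose f hf using hg.1.exists_map_castSucc_eq
  obtain ⟨⟨y, s⟩, hys⟩ := Option.ne_none_iff_exists'.1 fun h : f (Fin.last n) = none =>
    hg.apply_last_ne_none (by simp [← hf, h])
  refine ⟨fun x => f x.castSucc, y, s, funext fun x => ?_⟩
  cases x using Fin.lastCases with
  | last => simp [attachLast_last, ← hf, hys]
  | cast x => rw [attachLast_castSucc, hf]

end AttachLast

section TreePoly

variable {A B : Type*} [CommSemiring A] [CommSemiring B]

/-- The increasing pruned even `k`-ary trees on `n` labeled nodes. -/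
def trees (k n : ℕ) : Finset (Fin n → Option (Fin n × Fin k)) := {f | IsTree f}

/-- The weight of a forest: each grandparent-old leaf pair counts `z`, each young leaf `p` and
each of the remaining nodes `q`. -/
def forestWeight {α : Type} [LinearOrder α] [Fintype α] {k : ℕ} (z p q : A)
    (f : α → Option (α × Fin k)) : A :=
  z ^ (oldLeaves f).card * p ^ (youngLeaves f).card * q ^ (otherNodes f).card

lemma IsTree.forestWeight_zero {α : Type} [LinearOrder α] [Fintype α] [Nontrivial α] {k : ℕ}
    {f : α → Option (α × Fin k)} (hf : IsTree f) (z q : A) :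
    forestWeight z 0 q f =
      if NoYoungLeaf f then z ^ lleafStat f * q ^ (Fintype.card α - 2 * lleafStat f) else 0 := by
  have hcard := card_nodeClasses f
  rw [forestWeight, noYoungLeaf_iff, hf.lleafStat_eq]
  split_ifs with hyoung
  · have hother : (otherNodes f).card = Fintype.card α - 2 * (oldLeaves f).card := by
      rw [hyoung, Finset.card_empty] at hcard
      lia
    rw [hyoung, Finset.card_empty, pow_zero, mul_one, add_zero, hother]
  · rw [zero_pow (mt Finset.card_eq_zero.1 hyoung), mul_zero, zero_mul]

/-- The enumerator of increasing pruned even `k`-ary trees by old leaves (marked by `z`, together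
with their grandparents), young leaves (`p`) and remaining nodes (`q`). -/
def treePoly (k n : ℕ) (z p q : A) : A := ∑ f ∈ trees k n, forestWeight z p q f

lemma mem_trees {k n : ℕ} {f : Fin n → Option (Fin n × Fin k)} : f ∈ trees k n ↔ IsTree f := by
  simp [trees]

lemma map_treePoly (φ : A →+* B) (k n : ℕ) (z p q : A) :
    φ (treePoly k n z p q) = treePoly k n (φ z) (φ p) (φ q) := by
  simp [treePoly, forestWeight]

lemma sum_trees_succ {k n : ℕ} [NeZero n]
    (F : (Fin (n + 1) → Option (Fin (n + 1) × Fin k)) → A) :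
    ∑ g ∈ trees k (n + 1), F g = ∑ f ∈ trees k n, ∑ y, ∑ s, F (attachLast f y s) := by
  simp only [← Finset.sum_product']
  symm
  refine Finset.sum_nbij (fun t => attachLast t.1 t.2.1 t.2.2) ?_ ?_ ?_ fun _ _ => rfl
  · intro t ht
    simpa [mem_trees, isTree_attachLast] using ht
  · rintro ⟨f, y, s⟩ - ⟨g, z, t⟩ - h
    simpa using attachLast_inj.1 h
  · intro g hg
    obtain ⟨f, y, s, rfl⟩ := exists_attachLast (mem_trees.1 hg)
    exact ⟨(f, y, s), by simpa [mem_trees, isTree_attachLast] using hg, rfl⟩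

section AttachLast

variable {k n : ℕ} (f : Fin n → Option (Fin n × Fin k)) {y : Fin n} (s : Fin k) (z p q : A)

lemma forestWeight_attachLast {a b c : ℕ} (ha : (oldLeaves (attachLast f y s)).card = a)
    (hb : (youngLeaves (attachLast f y s)).card = b) (hc : 2 * a + b + c = n + 1) :
    forestWeight z p q (attachLast f y s) = z ^ a * p ^ b * q ^ c := by
  have hcard := card_nodeClasses (attachLast f y s)
  rw [Fintype.card_fin] at hcard
  rw [forestWeight, ha, hb, show (otherNodes (attachLast f y s)).card = c by lia]

variable {f}

lemma forestWeight_attachLast_of_mem_oldLeaves (hy : y ∈ oldLeaves f) :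
    forestWeight z p q (attachLast f y s) =
      z ^ (oldLeaves f).card * p ^ (youngLeaves f).card * q ^ ((otherNodes f).card + 1) := by
  have hyoung := Finset.disjoint_left.1 (disjoint_oldLeaves_youngLeaves f) hy
  have hparent := Finset.disjoint_left.1 (disjoint_leaves_oldLeafParents f)
    (Finset.mem_union_left _ hy)
  have hcard := card_nodeClasses f
  rw [Fintype.card_fin] at hcard
  apply forestWeight_attachLast
  · simpa [hy, hparent] using card_oldLeaves_attachLast f y s
  · simpa [hyoung, hparent] using card_youngLeaves_attachLast f y s
  · lia

lemma forestWeight_attachLast_of_mem_youngLeaves (hy : y ∈ youngLeaves f) :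
    forestWeight z p q (attachLast f y s) =
      z ^ ((oldLeaves f).card + 1) * p ^ ((youngLeaves f).card - 1) * q ^ (otherNodes f).card := by
  have hold := Finset.disjoint_right.1 (disjoint_oldLeaves_youngLeaves f) hy
  have hparent := Finset.disjoint_left.1 (disjoint_leaves_oldLeafParents f)
    (Finset.mem_union_right _ hy)
  have hcard := card_nodeClasses f
  have hpos := Finset.card_pos.2 ⟨y, hy⟩
  rw [Fintype.card_fin] at hcard
  apply forestWeight_attachLast
  · simpa [hold, hparent] using card_oldLeaves_attachLast f y s
  · exact Nat.eq_sub_of_add_eq (by simpa [hy, hparent] using card_youngLeaves_attachLast f y s)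
  · lia

lemma forestWeight_attachLast_of_mem_oldLeafParents (hy : y ∈ oldLeafParents f) :
    forestWeight z p q (attachLast f y s) =
      z ^ (oldLeaves f).card * p ^ ((youngLeaves f).card + 1) * q ^ (otherNodes f).card := by
  have hleaf := Finset.disjoint_right.1 (disjoint_leaves_oldLeafParents f) hy
  rw [Finset.mem_union, not_or] at hleaf
  have hcard := card_nodeClasses f
  rw [Fintype.card_fin] at hcard
  apply forestWeight_attachLast
  · simpa [hy, hleaf.1] using card_oldLeaves_attachLast f y s
  · simpa [hy, hleaf.2] using card_youngLeaves_attachLast f y s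
  · lia

lemma forestWeight_attachLast_of_mem_otherNodes (hy : y ∈ otherNodes f) :
    forestWeight z p q (attachLast f y s) =
      z ^ ((oldLeaves f).card + 1) * p ^ (youngLeaves f).card * q ^ ((otherNodes f).card - 1) := by
  have hpos := Finset.card_pos.2 ⟨y, hy⟩
  have hcard := card_nodeClasses f
  rw [Fintype.card_fin] at hcard
  simp only [otherNodes, Finset.mem_compl, Finset.mem_union, not_or] at hy
  apply forestWeight_attachLast
  · simpa [hy] using card_oldLeaves_attachLast f y s
  · simpa [hy] using card_youngLeaves_attachLast f y s
  · lia

variable (f) {z p q}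

lemma sum_forestWeight_attachLast {R : Type*} [CommSemiring R] [Algebra R A]
    (D : Derivation R A A) (hz : D z = z * (p + q)) (hp : D p = z) (hq : D q = z) :
    ∑ y, forestWeight z p q (attachLast f y s) = D (forestWeight z p q f) := by
  rw [sum_eq_sum_nodeClasses f,
    Finset.sum_congr rfl fun y hy => forestWeight_attachLast_of_mem_oldLeaves s z p q hy,
    Finset.sum_congr rfl fun y hy => forestWeight_attachLast_of_mem_youngLeaves s z p q hy,
    Finset.sum_congr rfl fun y hy => forestWeight_attachLast_of_mem_oldLeafParents s z p q hy,
    Finset.sum_congr rfl fun y hy => forestWeight_attachLast_of_mem_otherNodes s z p q hy,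
    forestWeight, derivation_leaf_monomial D hz hp hq]
  simp only [Finset.sum_const, nsmul_eq_mul, card_oldLeafParents]

end AttachLast

variable {R : Type*} [CommSemiring R] [Algebra R A]

lemma treePoly_succ (D : Derivation R A A) {z p q : A} (hz : D z = z * (p + q)) (hp : D p = z)
    (hq : D q = z) (k n : ℕ) [NeZero n] :
    treePoly k (n + 1) z p q = k • D (treePoly k n z p q) := by
  rw [treePoly, sum_trees_succ, treePoly, map_sum, Finset.smul_sum]
  refine Finset.sum_congr rfl fun f _ => ?_
  rw [Finset.sum_comm, Finset.sum_congr rfl fun s _ => sum_forestWeight_attachLast f s D hz hp hq,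
    Finset.sum_const, Finset.card_univ, Fintype.card_fin]

lemma trees_one (k : ℕ) : trees k 1 = {fun _ => none} := by
  ext f
  rw [mem_trees, Finset.mem_singleton]
  constructor
  · rintro ⟨hforest, -⟩
    funext x
    exact Option.eq_none_iff_forall_ne_some.2 fun ⟨y, s⟩ h =>
      (hforest x y s h).ne (Subsingleton.elim y x)
  · rintro rfl
    exact ⟨by simp [IsForest], 0, rfl, fun _ _ => Subsingleton.elim _ _⟩

lemma treePoly_one (k : ℕ) (z p q : A) : treePoly k 1 z p q = q := by
  have hold : oldLeaves (fun _ => none : Fin 1 → Option (Fin 1 × Fin k)) = ∅ := by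
    simp [oldLeaves, oldNode]
  have hyoung : youngLeaves (fun _ => none : Fin 1 → Option (Fin 1 × Fin k)) = ∅ := by
    simp [youngLeaves, youngNode]
  have hother := card_nodeClasses (fun _ => none : Fin 1 → Option (Fin 1 × Fin k))
  rw [hold, hyoung] at hother
  simp only [treePoly, trees_one, Finset.sum_singleton, forestWeight]
  simp_all

lemma treePoly_mem_adjoin (D : Derivation R A A) {z p q : A} (hz : D z = z * (p + q))
    (hp : D p = z) (hq : D q = z) (k : ℕ) {n : ℕ} (hn : 2 ≤ n) :
    treePoly k n z p q ∈ Algebra.adjoin R {z, p + q} := by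
  induction n, hn using Nat.le_induction with
  | base =>
    rw [treePoly_succ D hz hp hq, treePoly_one, hq]
    exact nsmul_mem (Algebra.subset_adjoin (by simp)) k
  | succ n hn ih =>
    have : NeZero n := ⟨by lia⟩
    rw [treePoly_succ D hz hp hq]
    refine nsmul_mem (derivation_mem_adjoin D ?_ ih) k
    have hzmem : z ∈ Algebra.adjoin R {z, p + q} := Algebra.subset_adjoin (by simp)
    have hpqmem : p + q ∈ Algebra.adjoin R {z, p + q} := Algebra.subset_adjoin (by simp)
    simpa [hz, hp, hq] using ⟨mul_mem hzmem hpqmem, add_mem hzmem hzmem⟩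

open MvPolynomial in
theorem treePoly_eq_treePoly_zero_add (k : ℕ) {n : ℕ} (hn : 2 ≤ n) (z p q : A) :
    treePoly k n z p q = treePoly k n z 0 (p + q) := by
  let Z : MvPolynomial (Fin 3) ℕ := X 0
  let P : MvPolynomial (Fin 3) ℕ := X 1
  let Q : MvPolynomial (Fin 3) ℕ := X 2
  let D : Derivation ℕ (MvPolynomial (Fin 3) ℕ) (MvPolynomial (Fin 3) ℕ) :=
    mkDerivation ℕ ![Z * (P + Q), Z, Z]
  have hmem : treePoly k n Z P Q ∈ Algebra.adjoin ℕ {Z, P + Q} :=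
    treePoly_mem_adjoin D (by simp [D, Z]) (by simp [D, P]) (by simp [D, Q]) k hn
  let σ : MvPolynomial (Fin 3) ℕ →ₐ[ℕ] MvPolynomial (Fin 3) ℕ := aeval ![Z, 0, P + Q]
  have hfix : Algebra.adjoin ℕ {Z, P + Q} ≤ AlgHom.equalizer σ (AlgHom.id ℕ _) :=
    Algebra.adjoin_le (by simp [Set.insert_subset_iff, σ, Z, P, Q])
  have hgeneric : treePoly k n Z 0 (P + Q) = treePoly k n Z P Q := calc
    treePoly k n Z 0 (P + Q) = σ (treePoly k n Z P Q) := by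
      rw [← AlgHom.coe_toRingHom, map_treePoly]
      simp [σ, Z, P, Q]
    _ = treePoly k n Z P Q := hfix hmem
  let φ : MvPolynomial (Fin 3) ℕ →+* A := (MvPolynomial.aeval (R := ℕ) ![z, p, q]).toRingHom
  simpa [map_treePoly, φ, Z, P, Q] using (congrArg φ hgeneric).symm

lemma treePoly_zero (k : ℕ) {n : ℕ} (hn : 2 ≤ n) (z q : A) :
    treePoly k n z 0 q = ∑ i ∈ Finset.Icc 1 (n / 2),
      (Nat.card {f : Fin n → Option (Fin n × Fin k) //
        IsTree f ∧ lleafStat f = i ∧ NoYoungLeaf f} : A) * z ^ i * q ^ (n - 2 * i) := by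
  have : Nontrivial (Fin n) := Fin.nontrivial_iff_two_le.2 hn
  rw [treePoly, Finset.sum_congr rfl fun f hf => (mem_trees.1 hf).forestWeight_zero z q,
    ← Finset.sum_filter, Fintype.card_fin,
    ← Finset.sum_fiberwise_of_maps_to (t := Finset.Icc 1 (n / 2)) (g := lleafStat) fun f hf => ?_]
  · refine Finset.sum_congr rfl fun i _ => ?_
    rw [Finset.sum_eq_card_nsmul (b := z ^ i * q ^ (n - 2 * i)), nsmul_eq_mul, mul_assoc]
    · rw [Nat.card_eq_fintype_card, Fintype.card_subtype]
      congr 3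
      ext f
      simp only [Finset.mem_filter, mem_trees, Finset.mem_univ, true_and]
      tauto
    · intro f hf
      rw [(Finset.mem_filter.1 hf).2]
  · obtain ⟨htree, hyoung⟩ := Finset.mem_filter.1 hf
    simpa using (mem_trees.1 htree).lleafStat_mem_Icc hyoung

end TreePoly

section InsertBlock

variable {k N p : ℕ} {v : ℕ → ℕ}

/-- Inserts `k` consecutive letters `N` into the word `v`, starting at position `p`. -/
def insertBlock (k N p : ℕ) (v : ℕ → ℕ) (i : ℕ) : ℕ :=
  if i < p then v i else if i < p + k then N else v (i - k)

/-- The position, after a block of length `k` has been inserted at position `p`, of the letter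
that was at position `i` before. -/
def skipBlock (k p i : ℕ) : ℕ := if i < p then i else i + k

lemma skipBlock_of_lt {i : ℕ} (hi : i < p) : skipBlock k p i = i := if_pos hi

lemma skipBlock_of_le {i : ℕ} (hi : p ≤ i) : skipBlock k p i = i + k := if_neg hi.not_gt

lemma skipBlock_strictMono (k p : ℕ) : StrictMono (skipBlock k p) := by
  intro i j hij
  grind [skipBlock]

lemma skipBlock_notMem_Ico (k p i : ℕ) : skipBlock k p i ∉ Set.Ico p (p + k) := by
  grind [skipBlock]

lemma exists_skipBlock_eq {i : ℕ} (hi : i ∉ Set.Ico p (p + k)) : ∃ j, skipBlock k p j = i := by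
  by_cases hip : i < p
  · exact ⟨i, skipBlock_of_lt hip⟩
  · exact ⟨i - k, by grind [skipBlock]⟩

lemma forall_iff_block_and_skipBlock (k p : ℕ) {P : ℕ → Prop} :
    (∀ i, P i) ↔ (∀ i ∈ Set.Ico p (p + k), P i) ∧ ∀ j, P (skipBlock k p j) := by
  refine ⟨fun h => ⟨fun i _ => h i, fun j => h _⟩, fun ⟨hblock, hskip⟩ i => ?_⟩
  by_cases hi : i ∈ Set.Ico p (p + k)
  · exact hblock i hi
  · obtain ⟨j, rfl⟩ := exists_skipBlock_eq hi
    exact hskip j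

lemma add_le_skipBlock_iff {L i : ℕ} (hp : p ≤ L) : L + k ≤ skipBlock k p i ↔ L ≤ i := by
  grind [skipBlock]

lemma insertBlock_of_mem {i : ℕ} (hi : i ∈ Set.Ico p (p + k)) : insertBlock k N p v i = N := by
  rw [insertBlock, if_neg hi.1.not_gt, if_pos hi.2]

lemma insertBlock_skipBlock (k N p : ℕ) (v : ℕ → ℕ) (i : ℕ) :
    insertBlock k N p v (skipBlock k p i) = v i := by
  grind [insertBlock, skipBlock]

lemma insertBlock_eq_iff {w : ℕ → ℕ} : insertBlock k N p v = w ↔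
    (∀ i ∈ Set.Ico p (p + k), w i = N) ∧ ∀ j, w (skipBlock k p j) = v j := by
  rw [funext_iff, forall_iff_block_and_skipBlock k p]
  simp +contextual only [insertBlock_of_mem, insertBlock_skipBlock, eq_comm]

lemma insertBlock_preimage_self (hv : ∀ i, v i ≠ N) :
    insertBlock k N p v ⁻¹' {N} = Set.Ico p (p + k) := by
  rw [Set.ext_iff, forall_iff_block_and_skipBlock k p]
  simp +contextual only [Set.mem_preimage, Set.mem_singleton_iff, insertBlock_of_mem,
    insertBlock_skipBlock, skipBlock_notMem_Ico, hv, implies_true, and_self]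

lemma insertBlock_preimage_of_ne {m : ℕ} (hm : m ≠ N) :
    insertBlock k N p v ⁻¹' {m} = skipBlock k p '' (v ⁻¹' {m}) := by
  rw [Set.ext_iff, forall_iff_block_and_skipBlock k p]
  refine ⟨fun i hi => ?_, fun j => ?_⟩
  · simp only [Set.mem_preimage, Set.mem_singleton_iff, insertBlock_of_mem hi, hm.symm, false_iff]
    rintro ⟨j, -, rfl⟩
    exact skipBlock_notMem_Ico k p j hi
  · simp [insertBlock_skipBlock, (skipBlock_strictMono k p).injective.eq_iff]

lemma eq_and_eq_of_insertBlock_eq {q : ℕ} {w : ℕ → ℕ} (hk : 0 < k) (hv : ∀ i, v i ≠ N)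
    (hw : ∀ i, w i ≠ N) (h : insertBlock k N p v = insertBlock k N q w) : v = w ∧ p = q := by
  have hblock : Set.Ico p (p + k) = Set.Ico q (q + k) := by
    rw [← insertBlock_preimage_self hv, h, insertBlock_preimage_self hw]
  obtain rfl : p = q := by
    have hp : p ∈ Set.Ico q (q + k) := hblock ▸ Set.left_mem_Ico.2 (by lia)
    have hq : q ∈ Set.Ico p (p + k) := hblock ▸ Set.left_mem_Ico.2 (by lia)
    exact le_antisymm hq.1 hp.1
  refine ⟨funext fun i => ?_, rfl⟩
  rw [← insertBlock_skipBlock k N p v, h, insertBlock_skipBlock]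

end InsertBlock

section StirlingWords

/-- The words (extended by zeros, as in `wordOf`) of the `k`-Stirling permutations of order `n`
with first letter `1`. -/
structure IsStirlingWord (k n : ℕ) (v : ℕ → ℕ) : Prop where
  le : ∀ i, v i ≤ n
  eq_zero_iff : ∀ i, v i = 0 ↔ k * n ≤ i
  ncard_eq : ∀ m ∈ Set.Icc 1 n, (v ⁻¹' {m}).ncard = k
  le_of_between : ∀ i j l, i ≤ j → j ≤ l → v i = v l → v i ≤ v j
  zero_eq_one : v 0 = 1

variable {k n p : ℕ} {v : ℕ → ℕ}

lemma le_of_between_insertBlock_iff {N : ℕ} (hv : ∀ i, v i < N) :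
    (∀ i j l, i ≤ j → j ≤ l → insertBlock k N p v i = insertBlock k N p v l →
      insertBlock k N p v i ≤ insertBlock k N p v j) ↔
    ∀ i j l, i ≤ j → j ≤ l → v i = v l → v i ≤ v j := by
  have hmono {i j : ℕ} := (skipBlock_strictMono k p).le_iff_le (a := i) (b := j)
  have hpre := insertBlock_preimage_self (k := k) (p := p) fun i => (hv i).ne
  have hmem (i : ℕ) : insertBlock k N p v i = N ↔ i ∈ Set.Ico p (p + k) := by
    rw [← hpre, Set.mem_preimage, Set.mem_singleton_iff]
  constructor
  · intro h i j l hij hjl hil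
    simpa only [insertBlock_skipBlock] using h (skipBlock k p i) (skipBlock k p j)
      (skipBlock k p l) (hmono.2 hij) (hmono.2 hjl) (by simpa only [insertBlock_skipBlock])
  · intro h i j l hij hjl hil
    by_cases hi : i ∈ Set.Ico p (p + k)
    · have hl := (hmem l).1 (hil ▸ (hmem i).2 hi)
      rw [(hmem i).2 hi, (hmem j).2 ⟨hi.1.trans hij, hjl.trans_lt hl.2⟩]
    · have hl : l ∉ Set.Ico p (p + k) := fun hl => hi ((hmem i).1 (hil.trans ((hmem l).2 hl)))
      obtain ⟨i, rfl⟩ := exists_skipBlock_eq hi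
      obtain ⟨l, rfl⟩ := exists_skipBlock_eq hl
      rw [insertBlock_skipBlock, insertBlock_skipBlock] at hil
      rw [insertBlock_skipBlock]
      by_cases hj : j ∈ Set.Ico p (p + k)
      · rw [insertBlock_of_mem hj]
        exact (hv i).le
      · obtain ⟨j, rfl⟩ := exists_skipBlock_eq hj
        rw [insertBlock_skipBlock]
        exact h i j l (hmono.1 hij) (hmono.1 hjl) hil

lemma isStirlingWord_insertBlock_iff (hp : p ∈ Finset.Icc 1 (k * n)) (hv : ∀ i, v i ≤ n) :
    IsStirlingWord k (n + 1) (insertBlock k (n + 1) p v) ↔ IsStirlingWord k n v := by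
  obtain ⟨hp1, hpn⟩ := Finset.mem_Icc.1 hp
  have hlt (i : ℕ) : v i < n + 1 := Nat.lt_succ_of_le (hv i)
  have hlength : (∀ i, insertBlock k (n + 1) p v i = 0 ↔ k * (n + 1) ≤ i) ↔
      ∀ i, v i = 0 ↔ k * n ≤ i := by
    rw [forall_iff_block_and_skipBlock k p, and_iff_right]
    · simp only [insertBlock_skipBlock, mul_add_one, add_le_skipBlock_iff hpn]
    · intro i hi
      rw [insertBlock_of_mem hi]
      grind
  have hcard (m : ℕ) (hm : m ≤ n) :
      (insertBlock k (n + 1) p v ⁻¹' {m}).ncard = (v ⁻¹' {m}).ncard := by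
    rw [insertBlock_preimage_of_ne (by lia),
      Set.ncard_image_of_injective _ (skipBlock_strictMono k p).injective]
  have hzero : insertBlock k (n + 1) p v 0 = v 0 := if_pos hp1
  constructor
  · rintro ⟨-, hlen, hcount, hbetween, hfirst⟩
    exact ⟨hv, hlength.1 hlen, fun m hm => hcard m hm.2 ▸ hcount m ⟨hm.1, hm.2.trans n.le_succ⟩,
      (le_of_between_insertBlock_iff hlt).1 hbetween, hzero ▸ hfirst⟩
  · rintro ⟨-, hlen, hcount, hbetween, hfirst⟩
    refine ⟨?_, hlength.2 hlen, fun m hm => ?_,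
      (le_of_between_insertBlock_iff hlt).2 hbetween, hzero ▸ hfirst⟩
    · rw [forall_iff_block_and_skipBlock k p]
      exact ⟨fun i hi => (insertBlock_of_mem hi).le,
        fun j => insertBlock_skipBlock k _ p v j ▸ (hlt j).le⟩
    · rcases hm.2.lt_or_eq with hmn | rfl
      · rw [hcard m (by lia), hcount m ⟨hm.1, by lia⟩]
      · rw [insertBlock_preimage_self fun i => (hlt i).ne]
        simp [← Finset.coe_Ico, Set.ncard_coe_finset]

lemma exists_eq_Ico_of_ordConnected {s : Set ℕ} (hs : s.OrdConnected) (hne : s.ncard ≠ 0) :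
    ∃ p, s = Set.Ico p (p + s.ncard) := by
  obtain ⟨t, rfl⟩ := (Set.finite_of_ncard_ne_zero hne).exists_finset_coe
  rw [Set.ncard_coe_finset] at hne ⊢
  have htne : t.Nonempty := Finset.card_ne_zero.1 hne
  have ht : t = Finset.Icc (t.min' htne) (t.max' htne) := Finset.Subset.antisymm
    (fun i hi => Finset.mem_Icc.2 ⟨t.min'_le i hi, t.le_max' i hi⟩)
    fun i hi => hs.out (t.min'_mem htne) (t.max'_mem htne) (Finset.mem_Icc.1 hi)
  have hcard := congrArg Finset.card ht
  rw [Nat.card_Icc] at hcard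
  refine ⟨t.min' htne, ?_⟩
  conv_lhs => rw [ht]
  ext i
  simp only [Finset.coe_Icc, Set.mem_Icc, Set.mem_Ico]
  lia

lemma IsStirlingWord.exists_insertBlock_eq (hk : 0 < k) (hn : 0 < n) {w : ℕ → ℕ}
    (hw : IsStirlingWord k (n + 1) w) :
    ∃ v p, IsStirlingWord k n v ∧ p ∈ Finset.Icc 1 (k * n) ∧ insertBlock k (n + 1) p v = w := by
  have hcard := hw.ncard_eq (n + 1) ⟨by lia, le_rfl⟩
  have hconn : (w ⁻¹' {n + 1}).OrdConnected := by
    refine ⟨fun i hi l hl j hj => le_antisymm (hw.le j) ?_⟩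
    rw [Set.mem_preimage, Set.mem_singleton_iff] at hi hl
    exact hi ▸ hw.le_of_between i j l hj.1 hj.2 (hi.trans hl.symm)
  obtain ⟨p, hp⟩ := exists_eq_Ico_of_ordConnected hconn (by lia)
  rw [hcard] at hp
  have hmem (i : ℕ) : w i = n + 1 ↔ i ∈ Set.Ico p (p + k) := by rw [← hp]; rfl
  have hpmem : p ∈ Finset.Icc 1 (k * n) := by
    have hfirst := mt (hmem 0).2 (by rw [hw.zero_eq_one]; lia)
    have hlast := (hmem (p + k - 1)).2 ⟨by lia, by lia⟩
    have hlength := mt (hw.eq_zero_iff (p + k - 1)).2 (by lia)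
    rw [mul_add_one] at hlength
    grind
  have hinsert : insertBlock k (n + 1) p (w ∘ skipBlock k p) = w :=
    insertBlock_eq_iff.2 ⟨fun i hi => (hmem i).2 hi, fun j => rfl⟩
  have hle (i : ℕ) : w (skipBlock k p i) ≤ n := Nat.le_of_lt_succ <|
    (hw.le _).lt_of_ne fun h => skipBlock_notMem_Ico k p i ((hmem _).1 h)
  exact ⟨_, p, (isStirlingWord_insertBlock_iff hpmem hle).1 (hinsert.symm ▸ hw), hpmem, hinsert⟩

end StirlingWords

section AscentPlateaux

/-- `i` is an ascent-plateau of the infinite word `v`: `v i < v (i + 1) = ⋯ = v (i + k)`. -/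
def IsAscentPlateau (k : ℕ) (v : ℕ → ℕ) (i : ℕ) : Prop :=
  v i < v (i + 1) ∧ ∀ j < k, v (i + 1 + j) = v (i + 1)

/-- The ascent-plateaux of `v` before position `L`. -/
def ascentPlateaux (k L : ℕ) (v : ℕ → ℕ) : Finset ℕ := {i ∈ Finset.range L | IsAscentPlateau k v i}

/-- The positions at which an insertion into `v` destroys an ascent-plateau, either by breaking
its block of `k` equal letters or by separating that block from the smaller letter before it. -/
def plateauPositions (k L : ℕ) (v : ℕ → ℕ) : Finset ℕ :=
  (ascentPlateaux k L v).biUnion fun i => Finset.Ioc i (i + k)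

variable {k L N p : ℕ} {v : ℕ → ℕ}

lemma IsAscentPlateau.add_lt {i : ℕ} (hk : 0 < k) (hv : ∀ i, L ≤ i → v i = 0)
    (hi : IsAscentPlateau k v i) : i + k < L := by
  by_contra! hL
  have hlast := hi.2 (k - 1) (by lia)
  have hzero := hv (i + 1 + (k - 1)) (by lia)
  have hascent := hi.1
  lia

lemma mem_ascentPlateaux {i : ℕ} (hk : 0 < k) (hv : ∀ i, L ≤ i → v i = 0) :
    i ∈ ascentPlateaux k L v ↔ IsAscentPlateau k v i := by
  rw [ascentPlateaux, Finset.mem_filter, Finset.mem_range, and_iff_right_iff_imp]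
  exact fun hi => (Nat.le_add_right i k).trans_lt (hi.add_lt hk hv)

lemma apWord_eq_card_ascentPlateaux (hk : 0 < k) (hv : ∀ i, L ≤ i → v i = 0) :
    apWord k L v = (ascentPlateaux k L v).card := by
  rw [apWord]
  congr 1
  ext i
  rw [mem_ascentPlateaux hk hv, Finset.mem_filter, Finset.mem_range]
  exact ⟨fun hi => hi.2.2, fun hi => ⟨by linarith [hi.add_lt hk hv], hi.add_lt hk hv, hi⟩⟩

lemma IsAscentPlateau.disjoint_Ioc {i j : ℕ} (hi : IsAscentPlateau k v i)
    (hj : IsAscentPlateau k v j) (hij : i ≠ j) :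
    Disjoint (Finset.Ioc i (i + k)) (Finset.Ioc j (j + k)) := by
  wlog hlt : i < j generalizing i j
  · exact (this hj hi hij.symm (hij.lt_or_gt.resolve_left hlt)).symm
  have hle : i + k ≤ j := by
    by_contra! h
    have hconst := hi.2 (j - (i + 1)) (by lia)
    have hconst' := hi.2 (j - i) (by lia)
    rw [show i + 1 + (j - (i + 1)) = j by lia] at hconst
    rw [show i + 1 + (j - i) = j + 1 by lia] at hconst'
    exact hj.1.ne (hconst.trans hconst'.symm)
  exact Finset.Ioc_disjoint_Ioc_of_le hle

lemma not_isAscentPlateau_insertBlock_of_mem (hv : ∀ i, v i ≤ N) {i : ℕ}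
    (hi : i ∈ Set.Ico p (p + k)) : ¬ IsAscentPlateau k (insertBlock k N p v) i := by
  have hle (j : ℕ) : insertBlock k N p v j ≤ N := by
    rw [insertBlock]
    split_ifs
    exacts [hv _, le_rfl, hv _]
  rintro ⟨h, -⟩
  rw [insertBlock_of_mem hi] at h
  exact h.not_ge (hle _)

lemma isAscentPlateau_insertBlock_skipBlock (hk : 0 < k) (hv : ∀ i, v i < N) (i : ℕ) :
    IsAscentPlateau k (insertBlock k N p v) (skipBlock k p i) ↔
      i + 1 = p ∨ IsAscentPlateau k v i ∧ p ∉ Finset.Ioc i (i + k) := by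
  have hblock (j : ℕ) (hj : j ∈ Set.Ico p (p + k)) : insertBlock k N p v j = N :=
    insertBlock_of_mem hj
  have hskip := insertBlock_skipBlock k N p v
  rcases lt_trichotomy (i + 1) p with hip | rfl | hip
  · by_cases hfit : i + k < p
    · have hleft (j : ℕ) (hj : j ≤ i + k) : insertBlock k N p v j = v j := if_pos (by lia)
      grind [IsAscentPlateau, skipBlock_of_lt]
    · have hfirst := hskip (i + 1)
      have hbreak := hblock (i + 1 + (p - (i + 1))) ⟨by lia, by lia⟩
      have hmem : p ∈ Finset.Ioc i (i + k) := Finset.mem_Ioc.2 ⟨by lia, by lia⟩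
      rw [skipBlock_of_lt hip] at hfirst
      rw [skipBlock_of_lt (by lia)]
      simp only [hip.ne, hmem, not_true_eq_false, and_false, or_false, iff_false]
      rintro ⟨-, hplateau⟩
      rw [hplateau _ (by lia), hfirst] at hbreak
      exact (hv _).ne hbreak
  · have hfirst := hskip i
    rw [skipBlock_of_lt i.lt_succ_self] at hfirst ⊢
    simp only [true_or, iff_true]
    refine ⟨?_, fun j hj => ?_⟩
    · rw [hfirst, hblock _ ⟨le_rfl, by lia⟩]
      exact hv i
    · rw [hblock _ ⟨by lia, by lia⟩, hblock _ ⟨le_rfl, by lia⟩]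
  · have hright (j : ℕ) : insertBlock k N p v (i + k + j) = v (i + j) := by
      rw [← hskip (i + j), skipBlock_of_le (by lia), add_right_comm]
    have hmem : p ∉ Finset.Ioc i (i + k) := by grind
    rw [skipBlock_of_le (by lia), or_iff_right hip.ne', and_iff_left hmem]
    have hstart : insertBlock k N p v (i + k) = v i := hright 0
    simp only [IsAscentPlateau, add_assoc (i + k), add_assoc i 1, hright, hstart]

lemma insertBlock_eq_zero_of_le (hp : p ≤ L) (hv : ∀ i, L ≤ i → v i = 0) {i : ℕ}
    (hi : L + k ≤ i) : insertBlock k N p v i = 0 := by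
  rw [insertBlock, if_neg (by lia), if_neg (by lia)]
  exact hv _ (by lia)

lemma ascentPlateaux_insertBlock (hk : 0 < k) (hp : p ∈ Finset.Icc 1 L) (hv : ∀ i, v i < N)
    (hzero : ∀ i, L ≤ i → v i = 0) :
    ascentPlateaux k (L + k) (insertBlock k N p v) =
      insert (p - 1) ({i ∈ ascentPlateaux k L v | p ∉ Finset.Ioc i (i + k)}.image
        (skipBlock k p)) := by
  obtain ⟨hp1, hpL⟩ := Finset.mem_Icc.1 hp
  rw [Finset.ext_iff, forall_iff_block_and_skipBlock k p]
  simp only [mem_ascentPlateaux hk fun _ => insertBlock_eq_zero_of_le hpL hzero]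
  constructor
  · intro i hi
    refine iff_of_false (not_isAscentPlateau_insertBlock_of_mem (fun i => (hv i).le) hi) ?_
    simp only [Finset.mem_insert, Finset.mem_image, not_or, not_exists, not_and]
    exact ⟨by grind, fun j _ hj => skipBlock_notMem_Ico k p j (hj ▸ hi)⟩
  · intro i
    have hprev : skipBlock k p i = p - 1 ↔ i + 1 = p := by grind [skipBlock]
    rw [isAscentPlateau_insertBlock_skipBlock hk hv, Finset.mem_insert, hprev,
      (skipBlock_strictMono k p).injective.mem_finset_image, Finset.mem_filter,
      mem_ascentPlateaux hk hzero]

lemma card_ascentPlateaux_filter_mem_Ioc (hk : 0 < k) (hzero : ∀ i, L ≤ i → v i = 0) :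
    {i ∈ ascentPlateaux k L v | p ∈ Finset.Ioc i (i + k)}.card =
      if p ∈ plateauPositions k L v then 1 else 0 := by
  split_ifs with hp
  · obtain ⟨i, hi, hpi⟩ := Finset.mem_biUnion.1 hp
    refine Finset.card_eq_one.2 ⟨i, Finset.eq_singleton_iff_unique_mem.2
      ⟨Finset.mem_filter.2 ⟨hi, hpi⟩, fun j hj => ?_⟩⟩
    obtain ⟨hj, hpj⟩ := Finset.mem_filter.1 hj
    rw [mem_ascentPlateaux hk hzero] at hi hj
    by_contra hji
    exact Finset.disjoint_left.1 (hj.disjoint_Ioc hi hji) hpj hpi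
  · rw [Finset.card_eq_zero, Finset.filter_eq_empty_iff]
    exact fun i hi hpi => hp (Finset.mem_biUnion.2 ⟨i, hi, hpi⟩)

lemma apWord_insertBlock (hk : 0 < k) (hp : p ∈ Finset.Icc 1 L) (hv : ∀ i, v i < N)
    (hzero : ∀ i, L ≤ i → v i = 0) :
    apWord k (L + k) (insertBlock k N p v) + (if p ∈ plateauPositions k L v then 1 else 0) =
      apWord k L v + 1 := by
  have hprev : p - 1 ∉ {i ∈ ascentPlateaux k L v | p ∉ Finset.Ioc i (i + k)}.image
      (skipBlock k p) := by
    simp only [Finset.mem_image, Finset.mem_filter]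
    grind [skipBlock]
  have hsplit := Finset.card_filter_add_card_filter_not (s := ascentPlateaux k L v)
    fun i => p ∈ Finset.Ioc i (i + k)
  rw [apWord_eq_card_ascentPlateaux hk hzero, apWord_eq_card_ascentPlateaux hk
      fun _ => insertBlock_eq_zero_of_le (Finset.mem_Icc.1 hp).2 hzero,
    ascentPlateaux_insertBlock hk hp hv hzero, Finset.card_insert_of_notMem hprev,
    Finset.card_image_of_injective _ (skipBlock_strictMono k p).injective,
    ← card_ascentPlateaux_filter_mem_Ioc hk hzero]
  lia

lemma card_plateauPositions (hk : 0 < k) (hzero : ∀ i, L ≤ i → v i = 0) :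
    (plateauPositions k L v).card = k * apWord k L v := by
  rw [plateauPositions, Finset.card_biUnion, apWord_eq_card_ascentPlateaux hk hzero]
  · simp [mul_comm]
  · intro i hi j hj hij
    rw [Finset.mem_coe, mem_ascentPlateaux hk hzero] at hi hj
    exact hi.disjoint_Ioc hj hij

lemma plateauPositions_subset (hk : 0 < k) (hzero : ∀ i, L ≤ i → v i = 0) :
    plateauPositions k L v ⊆ Finset.Icc 1 L := by
  refine Finset.biUnion_subset.2 fun i hi p hp => ?_
  have hlt := ((mem_ascentPlateaux hk hzero).1 hi).add_lt hk hzero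
  grind

lemma mul_apWord_le (hk : 0 < k) (hzero : ∀ i, L ≤ i → v i = 0) : k * apWord k L v ≤ L := by
  simpa [card_plateauPositions hk hzero] using
    Finset.card_le_card (plateauPositions_subset hk hzero)

lemma sum_apWord_insertBlock {M : Type*} [AddCommMonoid M] (hk : 0 < k) (hv : ∀ i, v i < N)
    (hzero : ∀ i, L ≤ i → v i = 0) (F : ℕ → M) :
    ∑ p ∈ Finset.Icc 1 L, F (apWord k (L + k) (insertBlock k N p v)) =
      (L - k * apWord k L v) • F (apWord k L v + 1) + (k * apWord k L v) • F (apWord k L v) := by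
  have hsubset := plateauPositions_subset hk hzero
  have hcard := card_plateauPositions hk hzero
  rw [← Finset.sum_sdiff hsubset]
  congr 1
  · rw [← hcard, Finset.sum_eq_card_nsmul, Finset.card_sdiff_of_subset hsubset, Nat.card_Icc,
      Nat.add_sub_cancel]
    intro p hp
    obtain ⟨hp, hpv⟩ := Finset.mem_sdiff.1 hp
    rw [← apWord_insertBlock hk hp hv hzero, if_neg hpv, add_zero]
  · rw [← hcard, Finset.sum_eq_card_nsmul]
    intro p hp
    have hinsert := apWord_insertBlock hk (hsubset hp) hv hzero
    rw [if_pos hp, add_left_inj] at hinsert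
    rw [hinsert]

end AscentPlateaux

section StirlingPoly

variable {k n : ℕ} {v : ℕ → ℕ}

lemma wordOf_of_lt (w : Fin (k * n) → Fin n) {i : ℕ} (hi : i < k * n) :
    wordOf k n w i = (w ⟨i, hi⟩ : ℕ) + 1 :=
  dif_pos hi

lemma wordOf_injective (k n : ℕ) : Function.Injective (wordOf k n) := by
  intro w w' h
  ext i
  simpa [wordOf_of_lt _ i.2] using congrFun h i

lemma wordOf_preimage (w : Fin (k * n) → Fin n) (m : Fin n) :
    wordOf k n w ⁻¹' {(m : ℕ) + 1} = Fin.val '' {i | w i = m} := by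
  ext i
  by_cases hi : i < k * n
  · simp [wordOf_of_lt w hi, Fin.exists_iff, hi, Fin.ext_iff]
  · simp [wordOf, Fin.exists_iff, hi]

lemma le_of_between_wordOf_iff (w : Fin (k * n) → Fin n) :
    (∀ i j l, i ≤ j → j ≤ l → wordOf k n w i = wordOf k n w l →
      wordOf k n w i ≤ wordOf k n w j) ↔
    ∀ i j l : Fin (k * n), i ≤ j → j ≤ l → w i = w l → w i ≤ w j := by
  constructor
  · intro h i j l hij hjl hil
    simpa [wordOf_of_lt] using h i j l hij hjl (by simp [wordOf_of_lt, hil])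
  · intro h i j l hij hjl hil
    by_cases hl : l < k * n
    · rw [wordOf_of_lt w (hij.trans_lt (hjl.trans_lt hl)), wordOf_of_lt w hl, add_left_inj,
        ← Fin.ext_iff] at hil
      rw [wordOf_of_lt w (hij.trans_lt (hjl.trans_lt hl)), wordOf_of_lt w (hjl.trans_lt hl)]
      exact Nat.succ_le_succ (h _ ⟨j, hjl.trans_lt hl⟩ _ hij hjl hil)
    · rw [hil, wordOf, dif_neg hl]
      exact Nat.zero_le _

lemma isStirlingWord_wordOf_iff (hk : 0 < k) (hn : 0 < n) (w : Fin (k * n) → Fin n) :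
    IsStirlingWord k n (wordOf k n w) ↔ IsKStirling k n w ∧
      ∀ (h0 : 0 < k * n) (hn0 : 0 < n), w ⟨0, h0⟩ = ⟨0, hn0⟩ := by
  have hkn : 0 < k * n := Nat.mul_pos hk hn
  have hcard (m : Fin n) :
      (wordOf k n w ⁻¹' {(m : ℕ) + 1}).ncard = (Finset.univ.filter fun i => w i = m).card := by
    rw [wordOf_preimage, Set.ncard_image_of_injective _ Fin.val_injective,
      ← Set.ncard_coe_finset, Finset.coe_filter_univ]
  have hfirst : wordOf k n w 0 = 1 ↔
      ∀ (h0 : 0 < k * n) (hn0 : 0 < n), w ⟨0, h0⟩ = ⟨0, hn0⟩ := by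
    simp [wordOf_of_lt w hkn, Fin.ext_iff, hk, hn]
  constructor
  · rintro ⟨-, -, hcount, hbetween, hone⟩
    exact ⟨⟨fun m => hcard m ▸ hcount _ ⟨by lia, m.2⟩, (le_of_between_wordOf_iff w).1 hbetween⟩,
      hfirst.1 hone⟩
  · rintro ⟨⟨hcount, hbetween⟩, hone⟩
    refine ⟨fun i => ?_, fun i => ?_, fun m hm => ?_, (le_of_between_wordOf_iff w).2 hbetween,
      hfirst.2 hone⟩
    · rw [wordOf]
      split_ifs <;> lia
    · rw [wordOf]
      split_ifs <;> lia
    · obtain ⟨m, rfl⟩ := Nat.exists_eq_add_of_le' hm.1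
      exact (hcard ⟨m, hm.2⟩).trans (hcount _)

lemma IsStirlingWord.exists_wordOf_eq (hv : IsStirlingWord k n v) : ∃ w, wordOf k n w = v := by
  have hpos {i : ℕ} (hi : i < k * n) : v i ≠ 0 := mt (hv.eq_zero_iff i).1 hi.not_ge
  refine ⟨fun i => ⟨v i - 1, by have := hpos i.2; have := hv.le i; lia⟩, funext fun i => ?_⟩
  by_cases hi : i < k * n
  · rw [wordOf_of_lt _ hi]
    exact Nat.sub_one_add_one (hpos hi)
  · rw [wordOf, dif_neg hi, (hv.eq_zero_iff i).2 (not_lt.1 hi)]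

/-- The words of the `k`-Stirling permutations of order `n` with first letter `1`. -/
def stirlingWords (k n : ℕ) : Finset (ℕ → ℕ) :=
  ({w | IsStirlingWord k n (wordOf k n w)} : Finset (Fin (k * n) → Fin n)).image (wordOf k n)

lemma mem_stirlingWords : v ∈ stirlingWords k n ↔ IsStirlingWord k n v := by
  simp only [stirlingWords, Finset.mem_image, Finset.mem_filter, Finset.mem_univ, true_and]
  constructor
  · rintro ⟨w, hw, rfl⟩
    exact hw
  · intro hv
    obtain ⟨w, rfl⟩ := hv.exists_wordOf_eq
    exact ⟨w, hv, rfl⟩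

variable {A B : Type*} [CommSemiring A] [CommSemiring B]

lemma sum_stirlingWords_succ (hk : 0 < k) (hn : 0 < n) (F : (ℕ → ℕ) → A) :
    ∑ w ∈ stirlingWords k (n + 1), F w =
      ∑ v ∈ stirlingWords k n, ∑ p ∈ Finset.Icc 1 (k * n), F (insertBlock k (n + 1) p v) := by
  rw [← Finset.sum_product']
  symm
  refine Finset.sum_nbij (fun t => insertBlock k (n + 1) t.2 t.1) ?_ ?_ ?_ fun _ _ => rfl
  · rintro ⟨v, p⟩ ht
    obtain ⟨hv, hp⟩ := Finset.mem_product.1 ht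
    rw [mem_stirlingWords] at hv ⊢
    exact (isStirlingWord_insertBlock_iff hp hv.le).2 hv
  · rintro ⟨v, p⟩ ht ⟨w, q⟩ ht' h
    have hv := mem_stirlingWords.1 (Finset.mem_product.1 ht).1
    have hw := mem_stirlingWords.1 (Finset.mem_product.1 ht').1
    exact Prod.ext_iff.2 (eq_and_eq_of_insertBlock_eq hk
      (fun i => (Nat.lt_succ_of_le (hv.le i)).ne) (fun i => (Nat.lt_succ_of_le (hw.le i)).ne) h)
  · intro w hw
    obtain ⟨v, p, hv, hp, rfl⟩ := (mem_stirlingWords.1 hw).exists_insertBlock_eq hk hn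
    exact ⟨(v, p), Finset.mem_product.2 ⟨mem_stirlingWords.2 hv, hp⟩, rfl⟩

/-- The homogenized ascent-plateau enumerator of the `k`-Stirling permutations of order `n` with
first letter `1`. -/
def stirlingPoly (k n : ℕ) (x y : A) : A :=
  ∑ v ∈ stirlingWords k n, x ^ apWord k (k * n) v * y ^ (n - apWord k (k * n) v)

lemma map_stirlingPoly (φ : A →+* B) (k n : ℕ) (x y : A) :
    φ (stirlingPoly k n x y) = stirlingPoly k n (φ x) (φ y) := by
  simp [stirlingPoly]

lemma sum_subtype_apStat (hk : 0 < k) (hn : 0 < n) (F : ℕ → A) :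
    ∑ w : {w : Fin (k * n) → Fin n // IsKStirling k n w ∧
        ∀ (h0 : 0 < k * n) (hn0 : 0 < n), w ⟨0, h0⟩ = ⟨0, hn0⟩}, F (apStat k n w.1) =
      ∑ v ∈ stirlingWords k n, F (apWord k (k * n) v) := by
  rw [stirlingWords, Finset.sum_image (wordOf_injective k n).injOn]
  refine (Finset.sum_subtype _ (fun w => ?_) fun w => F (apStat k n w)).symm
  rw [Finset.mem_filter, and_iff_right (Finset.mem_univ w), isStirlingWord_wordOf_iff hk hn]

lemma stirlingPoly_one (hk : 0 < k) (x y : A) : stirlingPoly k 1 x y = y := by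
  have hap (v : ℕ → ℕ) : apWord k (k * 1) v = 0 := by simp [apWord]
  have hword : IsStirlingWord k 1 (wordOf k 1 0) :=
    (isStirlingWord_wordOf_iff hk one_pos 0).2 ⟨⟨fun m => by
      simp [Subsingleton.elim _ m], fun _ _ _ _ _ _ => le_rfl⟩, fun _ _ => rfl⟩
  have hwords : stirlingWords k 1 = {wordOf k 1 0} := by
    refine Finset.eq_singleton_iff_unique_mem.2 ⟨mem_stirlingWords.2 hword, fun v hv => ?_⟩
    obtain ⟨w, rfl⟩ := (mem_stirlingWords.1 hv).exists_wordOf_eq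
    rw [Subsingleton.elim w 0]
  rw [stirlingPoly, hwords, Finset.sum_singleton, hap, pow_zero, one_mul, Nat.sub_zero, pow_one]

variable {R : Type*} [CommSemiring R] [Algebra R A]

lemma sum_pow_apWord_insertBlock (D : Derivation R A A) {x y : A} (hx : D x = x * y)
    (hy : D y = x * y) (hk : 0 < k) (hv : IsStirlingWord k n v) :
    ∑ p ∈ Finset.Icc 1 (k * n), x ^ apWord k (k * (n + 1)) (insertBlock k (n + 1) p v) *
        y ^ (n + 1 - apWord k (k * (n + 1)) (insertBlock k (n + 1) p v)) =
      k • D (x ^ apWord k (k * n) v * y ^ (n - apWord k (k * n) v)) := by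
  have hzero (i : ℕ) : k * n ≤ i → v i = 0 := (hv.eq_zero_iff i).2
  have hle : apWord k (k * n) v ≤ n := Nat.le_of_mul_le_mul_left (mul_apWord_le hk hzero) hk
  rw [mul_add_one, sum_apWord_insertBlock hk (fun i => Nat.lt_succ_of_le (hv.le i)) hzero
    fun a => x ^ a * y ^ (n + 1 - a), derivation_eulerian_monomial D hx hy, ← Nat.mul_sub,
    Nat.sub_add_comm hle, Nat.add_sub_add_right]
  simp only [nsmul_eq_mul, Nat.cast_mul]
  ring

lemma stirlingPoly_succ (D : Derivation R A A) {x y : A} (hx : D x = x * y) (hy : D y = x * y)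
    (hk : 0 < k) (hn : 0 < n) : stirlingPoly k (n + 1) x y = k • D (stirlingPoly k n x y) := by
  rw [stirlingPoly, sum_stirlingWords_succ hk hn, stirlingPoly, map_sum, Finset.smul_sum]
  exact Finset.sum_congr rfl fun v hv =>
    sum_pow_apWord_insertBlock D hx hy hk (mem_stirlingWords.1 hv)

end StirlingPoly

open MvPolynomial in
theorem stirlingPoly_eq_treePoly {A : Type*} [CommSemiring A] {k n : ℕ} (hk : 0 < k) (hn : 0 < n)
    (x y : A) : stirlingPoly k n x y = treePoly k n (x * y) x y := by
  let D : Derivation ℕ (MvPolynomial (Fin 2) ℕ) (MvPolynomial (Fin 2) ℕ) :=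
    mkDerivation ℕ ![X 0 * X 1, X 0 * X 1]
  have hx : D (X 0) = X 0 * X 1 := by simp [D]
  have hy : D (X 1) = X 0 * X 1 := by simp [D]
  have hxy : D (X 0 * X 1) = X 0 * X 1 * (X 0 + X 1) := by
    rw [Derivation.leibniz, hx, hy, smul_eq_mul, smul_eq_mul]
    ring
  have hgeneric : stirlingPoly k n (X 0 : MvPolynomial (Fin 2) ℕ) (X 1) =
      treePoly k n (X 0 * X 1) (X 0) (X 1) := by
    induction n, hn using Nat.le_induction with
    | base => rw [stirlingPoly_one hk, treePoly_one]
    | succ n hn ih =>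
      have : NeZero n := ⟨by lia⟩
      rw [stirlingPoly_succ D hx hy hk hn, treePoly_succ D hxy hx hy, ih]
  let φ : MvPolynomial (Fin 2) ℕ →+* A := (MvPolynomial.aeval (R := ℕ) ![x, y]).toRingHom
  simpa [map_stirlingPoly, map_treePoly, φ] using congrArg φ hgeneric

theorem c_poly_gamma_positive_general {R : Type*} [CommSemiring R] (n k : ℕ) (hn : 2 ≤ n)
    (hk : 1 ≤ k) :
    (∑ w : {w : Fin (k * n) → Fin n // IsKStirling k n w ∧
        ∀ (h0 : 0 < k * n) (hn0 : 0 < n), w ⟨0, h0⟩ = ⟨0, hn0⟩},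
      (X : Polynomial R) ^ apStat k n w.1) =
    ∑ i ∈ Finset.Icc 1 (n / 2),
      C ((Nat.card {f : Fin n → Option (Fin n × Fin k) //
            IsTree f ∧ lleafStat f = i ∧ NoYoungLeaf f} : ℕ) : R) *
        X ^ i * (1 + X) ^ (n - 2 * i) := by
  have hpos : 0 < n := by lia
  calc
    _ = stirlingPoly k n (X : R[X]) 1 := by
      simp only [sum_subtype_apStat hk hpos, stirlingPoly, one_pow, mul_one]
    _ = treePoly k n X X 1 := by rw [stirlingPoly_eq_treePoly hk hpos, mul_one]
    _ = treePoly k n X 0 (1 + X) := by rw [treePoly_eq_treePoly_zero_add k hn, add_comm]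
    _ = _ := by simp only [treePoly_zero k hn, map_natCast]

/-- For `n ≥ 2`, `k ≥ 1`, the polynomial `c_n^{(k)}(x) = Σ_{π ∈ Q̃_n(k)} x^{ap(π)}`
(summed over `k`-Stirling permutations of order `n` with first letter `1`) is
γ-positive: `c_n^{(k)}(x) = Σ_{i=1}^{⌊n/2⌋} γ̃_{n,k,i} x^i (1+x)^{n−2i}` where
`γ̃_{n,k,i}` counts increasing pruned even `k`-ary trees on `{1,…,n}` with `i` labeled
leaves and no young leaves. -/
theorem c_poly_gamma_positive (n k : ℕ) (hn : 2 ≤ n) (hk : 1 ≤ k) :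
    (∑ w : {w : Fin (k * n) → Fin n // IsKStirling k n w ∧
        ∀ (h0 : 0 < k * n) (hn0 : 0 < n), w ⟨0, h0⟩ = ⟨0, hn0⟩},
      (X : Polynomial ℝ) ^ apStat k n w.1) =
    ∑ i ∈ Finset.Icc 1 (n / 2),
      C ((Nat.card {f : Fin n → Option (Fin n × Fin k) //
            IsTree f ∧ lleafStat f = i ∧ NoYoungLeaf f} : ℕ) : ℝ) *
        X ^ i * (1 + X) ^ (n - 2 * i) :=
  c_poly_gamma_positive_general n k hn hk

end
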